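/- Let 𝓑 be an admissible W-orbit of sets of mutually orthogonal positive roots, B ∈ 𝓑, and let i ≠ j be nodes with i ≁ j. If r_i·B < B, r_j·B < B and r_i·B ≠ r_j·B, then r_i r_j·B < r_j·B and r_i r_j·B < r_i·B. -/

import Mathlib

/-!
Positivity of a root is detected by the sign of its height, and the positive roots of height one are
exactly the simple roots; distinct simple roots never have inner product `1`.  As a consequence, if
`α i ∉ B` then `r i · B` is just the image of `B` under `r i`, and since two elements `β` and
`β ± α i` are not orthogonal, `B \ r i · B` consists of the `β ∈ B` with `⟪β, α i⟫ = ±1`.  Comparing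
minimal heights, `r i · B < B` holds iff some `β ∈ B` with `⟪β, α i⟫ = 1` is at most as high as every
`β' ∈ B` with `⟪β', α i⟫ = -1` (`lt_iff_descends`).

The heart of the proof (`Descends.rAct`) is that such a witness `β` for `B` is carried by `r j` to a
witness `r j β` for `r j · B`.  If not, some `β' ∈ B` with `⟪β', α i⟫ = -1` satisfies
`ht β' - ht β < ⟪β', α j⟫ - ⟪β, α j⟫`.  When the right-hand side is `1`, `β` and `β'` have the same
height, so that `β' + α i - β` is a root of height one, that is, a simple root `α k`, and
`⟪α k, α j⟫ = 1` is impossible.  When it is `2`, the inner product of `β'` with `β - α i + α j` is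
`2`, so that `β' = β - α i + α j` and admissibility forces `r i · B = r j · B`.
-/

open scoped InnerProductSpace

/-- A finite crystallographic simply laced root system `Φ` in a real inner
product space, normalized so that `⟪β, β⟫ = 2` for all roots, together with a
fixed base `α 1, …, α n` (the nodes of the diagram `M`), the corresponding set
`Pos` of positive roots, and the height linear functional `ht`. -/
structure SLRS (V : Type) [NormedAddCommGroup V] [InnerProductSpace ℝ V] where
  /-- the number of nodes of the diagram -/
  n : ℕ
  /-- the set of roots -/
  Φ : Set V
  /-- the set of positive roots -/
  Pos : Set V
  /-- the simple roots -/
  α : Fin n → V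
  /-- the height functional: heights are sums of coefficients on simple roots -/
  ht : V →ₗ[ℝ] ℝ
  finite : Φ.Finite
  pos_subset : Pos ⊆ Φ
  mem_pos_or_neg : ∀ β ∈ Φ, β ∈ Pos ∨ -β ∈ Pos
  not_pos_and_neg : ∀ β ∈ Pos, -β ∉ Pos
  alpha_pos : ∀ i, α i ∈ Pos
  norm_two : ∀ β ∈ Φ, ⟪β, β⟫_ℝ = 2
  inner_int : ∀ β ∈ Φ, ∀ γ ∈ Φ, ∃ z : ℤ, ⟪β, γ⟫_ℝ = (z : ℝ)
  reflect_mem : ∀ β ∈ Φ, ∀ γ ∈ Φ, β - ⟪β, γ⟫_ℝ • γ ∈ Φ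
  reduced : ∀ β ∈ Φ, ∀ t : ℝ, t • β ∈ Φ → t = 1 ∨ t = -1
  pos_coeff : ∀ β ∈ Pos, ∃ a : Fin n → ℕ, β = ∑ i, (a i : ℝ) • α i
  ht_alpha : ∀ i, ht (α i) = 1

namespace SLRS

variable {V : Type} [NormedAddCommGroup V] [InnerProductSpace ℝ V] (S : SLRS V)

/-- Adjacency of two nodes of the diagram: `i ∼ j` iff `⟪α i, α j⟫ = -1`. -/
def adj (i j : Fin S.n) : Prop := ⟪S.α i, S.α j⟫_ℝ = -1

/-- The reflection along a root `δ` (normalized so that `⟪δ, δ⟫ = 2`). -/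
def reflRoot (δ : V) : V → V := fun v => v - ⟪v, δ⟫_ℝ • δ

/-- The fundamental reflection `r i`. -/
def refl (i : Fin S.n) : V → V := reflRoot (S.α i)

/-- A set of mutually orthogonal positive roots. -/
def IsOrthoSet (B : Set V) : Prop :=
  B ⊆ S.Pos ∧ ∀ β ∈ B, ∀ γ ∈ B, β ≠ γ → ⟪β, γ⟫_ℝ = 0

/-- The action of a map `w` on a set `B` of positive roots:
`w·B = Φ⁺ ∩ {± w β : β ∈ B}`. -/
def mapSet (w : V → V) (B : Set V) : Set V :=
  {x ∈ S.Pos | ∃ β ∈ B, w β = x ∨ w β = -x}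

/-- The action of the fundamental reflection `r i` on a set of positive roots. -/
def rAct (i : Fin S.n) (B : Set V) : Set V := S.mapSet (S.refl i) B

/-- The action of the reflection along a root `δ` on a set of positive roots. -/
def reflAct (δ : V) (B : Set V) : Set V := S.mapSet (reflRoot δ) B

/-- The `W`-orbit of `B`, `W` being generated by the fundamental reflections. -/
def orbitOf (B : Set V) : Set (Set V) :=
  {C | Relation.ReflTransGen (fun X Y => ∃ i, Y = S.rAct i X) B C}

/-- `𝓑` is a `W`-orbit of sets of mutually orthogonal positive roots. -/
def IsOrbit (𝓑 : Set (Set V)) : Prop :=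
  ∃ B, S.IsOrthoSet B ∧ 𝓑 = S.orbitOf B

/-- Admissibility of a `W`-orbit of sets of mutually orthogonal positive roots. -/
def Admissible (𝓑 : Set (Set V)) : Prop :=
  S.IsOrbit 𝓑 ∧ ∀ B ∈ 𝓑, ∀ i j : Fin S.n, i ≠ j → ¬ S.adj i j →
    (∃ γ, γ ∈ B ∧ γ - S.α i + S.α j ∈ B) → S.rAct i B = S.rAct j B

/-- The height order: `B < C` iff `B ≠ C` and the minimal height of an element
of `B \ C` is smaller than the minimal height of an element of `C \ B`. -/
def lt (B C : Set V) : Prop :=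
  B ≠ C ∧ sInf (⇑S.ht '' (B \ C)) < sInf (⇑S.ht '' (C \ B))

/-- The map `V → V` determined by the word `l = [i₁, …, iₛ]`,
namely `r i₁ ∘ r i₂ ∘ ⋯ ∘ r iₛ`. -/
def wordMap (l : List (Fin S.n)) : V → V := l.foldr (fun i f => S.refl i ∘ f) id

/-- A map belongs to the Weyl group `W` iff it is realized by a word in the
fundamental reflections. -/
def InW (w : V → V) : Prop := ∃ l : List (Fin S.n), S.wordMap l = w

/-- The Coxeter length of an element of `W`: the minimal length of a word in
the fundamental reflections representing it. -/
noncomputable def len (w : V → V) : ℕ :=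
  sInf {k | ∃ l : List (Fin S.n), l.length = k ∧ S.wordMap l = w}

/-- The action of `w ∈ W` on a set of positive roots. -/
def wAct (w : V → V) (B : Set V) : Set V := S.mapSet w B

/-- `r i₁ · (r i₂ · ⋯ (r iₛ · B))` for the word `l = [i₁, …, iₛ]`. -/
def suffixAct (l : List (Fin S.n)) (B : Set V) : Set V := l.foldr S.rAct B

/-- The chain `B > r iₛ · B > r iₛ₋₁ r iₛ · B > ⋯ > r i₁ ⋯ r iₛ · B` obtained by
successively applying the letters of the word `l = [i₁, …, iₛ]` to `B` is
strictly descending at every step. -/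
def DescChain (l : List (Fin S.n)) (B : Set V) : Prop :=
  ∀ k < l.length, S.lt (S.suffixAct (l.drop k) B) (S.suffixAct (l.drop (k + 1)) B)

end SLRS

open SLRS

variable {V : Type} [NormedAddCommGroup V] [InnerProductSpace ℝ V]

namespace SLRS

section Aux

variable (S : SLRS V)

/-! ### Heights and inner products of roots -/

lemma ht_eq_sum (a : Fin S.n → ℕ) :
    S.ht (∑ i, (a i : ℝ) • S.α i) = ((∑ i, a i : ℕ) : ℝ) := by
  simp [map_sum, S.ht_alpha]

lemma ne_zero_of_mem {β : V} (h : β ∈ S.Φ) : β ≠ 0 := by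
  rintro rfl
  have := S.norm_two _ h
  simp at this

lemma exists_nat_ht {β : V} (h : β ∈ S.Pos) : ∃ n : ℕ, 1 ≤ n ∧ S.ht β = n := by
  obtain ⟨a, ha⟩ := S.pos_coeff β h
  refine ⟨∑ i, a i, ?_, by rw [ha]; exact S.ht_eq_sum a⟩
  by_contra hlt
  have h0 : ∑ i, a i = 0 := by omega
  rw [Finset.sum_eq_zero_iff] at h0
  apply S.ne_zero_of_mem (S.pos_subset h)
  rw [ha]
  exact Finset.sum_eq_zero fun i hi => by simp [h0 i hi]

lemma ht_ge_one {β : V} (h : β ∈ S.Pos) : 1 ≤ S.ht β := by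
  obtain ⟨n, hn, e⟩ := S.exists_nat_ht h
  rw [e]; exact_mod_cast hn

lemma pos_of_ht {β : V} (h : β ∈ S.Φ) (h0 : 0 ≤ S.ht β) : β ∈ S.Pos := by
  rcases S.mem_pos_or_neg β h with h | h
  · exact h
  · have := S.ht_ge_one h
    rw [map_neg] at this
    linarith

lemma simple_of_ht_one {β : V} (h : β ∈ S.Pos) (h1 : S.ht β = 1) : ∃ k, β = S.α k := by
  obtain ⟨a, ha⟩ := S.pos_coeff β h
  have hs : ∑ i, a i = 1 := by
    have := S.ht_eq_sum a
    rw [← ha, h1] at this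
    exact_mod_cast this.symm
  obtain ⟨k, -, hk⟩ : ∃ k ∈ Finset.univ, a k ≠ 0 := by
    apply Finset.exists_ne_zero_of_sum_ne_zero
    omega
  have hsplit := Finset.add_sum_erase Finset.univ a (Finset.mem_univ k)
  have hz : ∑ i ∈ Finset.univ.erase k, a i = 0 := by omega
  have hk1 : a k = 1 := by omega
  refine ⟨k, ?_⟩
  rw [ha, Finset.sum_eq_single k]
  · simp [hk1]
  · intro b _ hb
    have := (Finset.sum_eq_zero_iff.1 hz) b (by simp [hb])
    simp [this]
  · simp

lemma eq_of_inner_two {β γ : V} (hβ : β ∈ S.Φ) (hγ : γ ∈ S.Φ) (h : ⟪β, γ⟫_ℝ = 2) : β = γ := by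
  have : ⟪β - γ, β - γ⟫_ℝ = 0 := by
    rw [real_inner_sub_sub_self, S.norm_two β hβ, S.norm_two γ hγ, h]; norm_num
  exact sub_eq_zero.1 (inner_self_eq_zero.1 this)

lemma eq_neg_of_inner_neg_two {β γ : V} (hβ : β ∈ S.Φ) (hγ : γ ∈ S.Φ) (h : ⟪β, γ⟫_ℝ = -2) :
    β = -γ := by
  have : ⟪β + γ, β + γ⟫_ℝ = 0 := by
    rw [real_inner_add_add_self, S.norm_two β hβ, S.norm_two γ hγ, h]; norm_num
  exact eq_neg_of_add_eq_zero_left (inner_self_eq_zero.1 this)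

lemma inner_cases {β γ : V} (hβ : β ∈ S.Pos) (hγ : γ ∈ S.Pos) (hne : β ≠ γ) :
    ⟪β, γ⟫_ℝ = -1 ∨ ⟪β, γ⟫_ℝ = 0 ∨ ⟪β, γ⟫_ℝ = 1 := by
  have hβ' := S.pos_subset hβ
  have hγ' := S.pos_subset hγ
  obtain ⟨z, hz⟩ := S.inner_int β hβ' γ hγ'
  have h1 : (0 : ℝ) ≤ ⟪β - γ, β - γ⟫_ℝ := real_inner_self_nonneg
  have h2 : (0 : ℝ) ≤ ⟪β + γ, β + γ⟫_ℝ := real_inner_self_nonneg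
  rw [real_inner_sub_sub_self, S.norm_two β hβ', S.norm_two γ hγ', hz] at h1
  rw [real_inner_add_add_self, S.norm_two β hβ', S.norm_two γ hγ', hz] at h2
  have u : z ≤ 2 := by exact_mod_cast (by linarith : (z : ℝ) ≤ 2)
  have l : -2 ≤ z := by exact_mod_cast (by linarith : (-2 : ℝ) ≤ z)
  rw [hz]
  interval_cases z
  · have := S.eq_neg_of_inner_neg_two hβ' hγ' (by rw [hz]; norm_num)
    subst this
    exact absurd hβ (S.not_pos_and_neg _ hγ)
  · left; norm_num
  · right; left; norm_num
  · right; right; norm_num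
  · exact absurd (S.eq_of_inner_two hβ' hγ' (by rw [hz]; norm_num)) hne

lemma sub_mem {β γ : V} (hβ : β ∈ S.Φ) (hγ : γ ∈ S.Φ) (h : ⟪β, γ⟫_ℝ = 1) : β - γ ∈ S.Φ := by
  have := S.reflect_mem β hβ γ hγ
  rwa [h, one_smul] at this

lemma add_mem {β γ : V} (hβ : β ∈ S.Φ) (hγ : γ ∈ S.Φ) (h : ⟪β, γ⟫_ℝ = -1) : β + γ ∈ S.Φ := by
  have := S.reflect_mem β hβ γ hγ
  rwa [h, neg_one_smul, sub_neg_eq_add] at this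

/-- No root has height zero. -/
lemma ht_ne_zero {β : V} (h : β ∈ S.Φ) : S.ht β ≠ 0 := fun h0 => by
  have := S.ht_ge_one (S.pos_of_ht h h0.ge)
  linarith

lemma inner_simple_ne_one (i j : Fin S.n) : ⟪S.α i, S.α j⟫_ℝ ≠ 1 := fun h => by
  refine S.ht_ne_zero (S.sub_mem (S.pos_subset (S.alpha_pos i)) (S.pos_subset (S.alpha_pos j)) h) ?_
  rw [map_sub, S.ht_alpha, S.ht_alpha, sub_self]

/-! ### Fundamental reflections -/

lemma refl_apply (i : Fin S.n) (v : V) : S.refl i v = v - ⟪v, S.α i⟫_ℝ • S.α i := rfl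

lemma inner_alpha (i : Fin S.n) : ⟪S.α i, S.α i⟫_ℝ = 2 :=
  S.norm_two _ (S.pos_subset (S.alpha_pos i))

lemma inner_refl_alpha (i : Fin S.n) (v : V) : ⟪S.refl i v, S.α i⟫_ℝ = -⟪v, S.α i⟫_ℝ := by
  rw [refl_apply, inner_sub_left, real_inner_smul_left, inner_alpha]; ring

lemma refl_refl (i : Fin S.n) (v : V) : S.refl i (S.refl i v) = v := by
  rw [refl_apply S i (S.refl i v), inner_refl_alpha, refl_apply]
  simp

lemma inner_refl_refl (i : Fin S.n) (v w : V) : ⟪S.refl i v, S.refl i w⟫_ℝ = ⟪v, w⟫_ℝ := by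
  simp only [refl_apply, inner_sub_left, inner_sub_right, real_inner_smul_left,
    real_inner_smul_right, inner_alpha, real_inner_comm (S.α i)]
  rw [real_inner_comm w (S.α i)]
  ring

lemma ht_refl (i : Fin S.n) (v : V) : S.ht (S.refl i v) = S.ht v - ⟪v, S.α i⟫_ℝ := by
  rw [refl_apply, map_sub, map_smul, S.ht_alpha]; simp

lemma refl_comm {i j : Fin S.n} (h : ⟪S.α i, S.α j⟫_ℝ = 0) (v : V) :
    S.refl i (S.refl j v) = S.refl j (S.refl i v) := by
  have h' : ⟪S.α j, S.α i⟫_ℝ = 0 := by rw [real_inner_comm]; exact h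
  simp only [refl_apply, inner_sub_left, real_inner_smul_left, h, h']
  simp only [mul_zero, sub_zero]
  abel

/-- A fundamental reflection keeps every positive root other than its own simple root positive. -/
lemma refl_pos (i : Fin S.n) {β : V} (hβ : β ∈ S.Pos) (hne : β ≠ S.α i) : S.refl i β ∈ S.Pos := by
  apply S.pos_of_ht (S.reflect_mem _ (S.pos_subset hβ) _ (S.pos_subset (S.alpha_pos i)))
  change 0 ≤ S.ht (S.refl i β)
  rw [ht_refl]
  have := S.ht_ge_one hβ
  rcases S.inner_cases hβ (S.alpha_pos i) hne with h | h | h <;> rw [h] <;> linarith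

lemma rAct_eq_image (i : Fin S.n) {C : Set V} (hC : C ⊆ S.Pos) (hi : S.α i ∉ C) :
    S.rAct i C = S.refl i '' C := by
  have key : ∀ β ∈ C, S.refl i β ∈ S.Pos := fun β hβ =>
    S.refl_pos i (hC hβ) fun e => hi (e ▸ hβ)
  ext x
  constructor
  · rintro ⟨hx, β, hβ, h | h⟩
    · exact ⟨β, hβ, h⟩
    · exact absurd (h ▸ key β hβ) (S.not_pos_and_neg x hx)
  · rintro ⟨β, hβ, rfl⟩
    exact ⟨key β hβ, β, hβ, Or.inl rfl⟩

lemma refl_eq_self (i : Fin S.n) {v : V} (h : ⟪v, S.α i⟫_ℝ = 0) : S.refl i v = v := by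
  rw [refl_apply, h, zero_smul, sub_zero]

lemma refl_alpha (i : Fin S.n) : S.refl i (S.α i) = -S.α i := by
  rw [refl_apply, inner_alpha, two_smul]; abel

lemma rAct_eq_self (i : Fin S.n) {C : Set V} (hC : S.IsOrthoSet C) (hi : S.α i ∈ C) :
    S.rAct i C = C := by
  have key : ∀ β ∈ C, β ≠ S.α i → S.refl i β = β := fun β hβ hne =>
    S.refl_eq_self i (hC.2 β hβ _ hi hne)
  ext x
  constructor
  · rintro ⟨hx, β, hβ, h⟩
    by_cases e : β = S.α i
    · rw [e, refl_alpha] at h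
      rcases h with h | h
      · exact absurd (h ▸ hx) (S.not_pos_and_neg _ (S.alpha_pos i))
      · exact neg_injective h ▸ hi
    · rw [key β hβ e] at h
      rcases h with h | h
      · exact h ▸ hβ
      · exact absurd (h ▸ hC.1 hβ) (S.not_pos_and_neg x hx)
  · intro hx
    refine ⟨hC.1 hx, x, hx, ?_⟩
    by_cases e : x = S.α i
    · right; rw [e, refl_alpha]
    · left; exact key x hx e

lemma isOrthoSet_rAct (i : Fin S.n) {C : Set V} (hC : S.IsOrthoSet C) :
    S.IsOrthoSet (S.rAct i C) := by
  by_cases hi : S.α i ∈ C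
  · rwa [S.rAct_eq_self i hC hi]
  · refine ⟨fun x hx => hx.1, ?_⟩
    rw [S.rAct_eq_image i hC.1 hi]
    rintro _ ⟨β, hβ, rfl⟩ _ ⟨γ, hγ, rfl⟩ hne
    rw [inner_refl_refl]
    exact hC.2 β hβ γ hγ fun e => hne (by rw [e])

lemma IsOrbit.isOrthoSet {S : SLRS V} {𝓑 : Set (Set V)} (h : S.IsOrbit 𝓑) {B : Set V}
    (hB : B ∈ 𝓑) : S.IsOrthoSet B := by
  obtain ⟨B₀, h₀, rfl⟩ := h
  change Relation.ReflTransGen _ _ _ at hB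
  induction hB with
  | refl => exact h₀
  | tail _ h ih =>
    obtain ⟨i, rfl⟩ := h
    exact S.isOrthoSet_rAct i ih

/-! ### The height criterion for `r i · C < C` -/

/-- `C` contains a root that `r i` lowers and that is at most as high as every root of `C` that
`r i` raises. -/
def Descends (i : Fin S.n) (C : Set V) : Prop :=
  ∃ β ∈ C, ⟪β, S.α i⟫_ℝ = 1 ∧ ∀ β' ∈ C, ⟪β', S.α i⟫_ℝ = -1 → S.ht β ≤ S.ht β'

lemma Descends.alpha_notMem {S : SLRS V} {i : Fin S.n} {C : Set V} (h : S.Descends i C)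
    (hC : S.IsOrthoSet C) : S.α i ∉ C := fun hi => by
  obtain ⟨β, hβ, h1, -⟩ := h
  by_cases e : β = S.α i
  · rw [e, inner_alpha] at h1; norm_num at h1
  · rw [hC.2 β hβ _ hi e] at h1; norm_num at h1

/-- The image of a moved root is not in `C`, since the two are not orthogonal. -/
lemma refl_notMem (i : Fin S.n) {C : Set V} (hC : S.IsOrthoSet C) (hi : S.α i ∉ C) {β : V}
    (hβ : β ∈ C) (h0 : ⟪β, S.α i⟫_ℝ ≠ 0) : S.refl i β ∉ C := fun hr => by
  have hne : β ≠ S.refl i β := fun e => by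
    have := S.inner_refl_alpha i β
    rw [← e] at this
    exact h0 (by linarith)
  have h := hC.2 _ hβ _ hr hne
  rw [refl_apply, inner_sub_right, real_inner_smul_right,
    S.norm_two β (S.pos_subset (hC.1 hβ))] at h
  rcases S.inner_cases (hC.1 hβ) (S.alpha_pos i) (fun e => hi (e ▸ hβ)) with h' | h' | h'
  · rw [h'] at h; norm_num at h
  · exact h0 h'
  · rw [h'] at h; norm_num at h

lemma refl_mem_diff (i : Fin S.n) {C : Set V} (hC : S.IsOrthoSet C) (hi : S.α i ∉ C) {β : V}
    (hβ : β ∈ C) (h0 : ⟪β, S.α i⟫_ℝ ≠ 0) : S.refl i β ∈ S.rAct i C \ C := by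
  refine ⟨?_, S.refl_notMem i hC hi hβ h0⟩
  rw [S.rAct_eq_image i hC.1 hi]
  exact ⟨β, hβ, rfl⟩

lemma mem_diff (i : Fin S.n) {C : Set V} (hC : S.IsOrthoSet C) (hi : S.α i ∉ C) {β : V}
    (hβ : β ∈ C) (h0 : ⟪β, S.α i⟫_ℝ ≠ 0) : β ∈ C \ S.rAct i C := by
  refine ⟨hβ, ?_⟩
  rw [S.rAct_eq_image i hC.1 hi]
  rintro ⟨γ, hγ, e⟩
  apply S.refl_notMem i hC hi hβ h0
  rwa [← e, refl_refl]

lemma bddBelow_ht {C : Set V} (hC : C ⊆ S.Pos) : BddBelow (S.ht '' C) :=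
  ⟨1, by rintro _ ⟨β, hβ, rfl⟩; exact S.ht_ge_one (hC hβ)⟩

/-- The infimum in the height order is attained on a nonempty set of positive roots. -/
lemma exists_ht_eq_sInf {C : Set V} (hC : C ⊆ S.Pos) (hne : C.Nonempty) :
    ∃ β ∈ C, S.ht β = sInf (S.ht '' C) := by
  have hf : (S.ht '' C).Finite := (S.finite.subset (hC.trans S.pos_subset)).image _
  exact (hne.image S.ht).csInf_mem hf

/-- This holds because heights of positive roots are integers. -/
lemma ht_le_of_lt_add_one {β γ : V} (hβ : β ∈ S.Pos) (hγ : γ ∈ S.Pos)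
    (h : S.ht β < S.ht γ + 1) : S.ht β ≤ S.ht γ := by
  obtain ⟨m, -, hm⟩ := S.exists_nat_ht hβ
  obtain ⟨n, -, hn⟩ := S.exists_nat_ht hγ
  rw [hm, hn] at h ⊢
  have : m < n + 1 := by exact_mod_cast h
  exact_mod_cast Nat.lt_succ_iff.1 this

lemma lt_iff_descends (i : Fin S.n) {C : Set V} (hC : S.IsOrthoSet C) :
    S.lt (S.rAct i C) C ↔ S.Descends i C := by
  have hr := (S.isOrthoSet_rAct i hC).1
  constructor
  · rintro ⟨hne, hlt⟩
    have hi : S.α i ∉ C := fun hi => hne (S.rAct_eq_self i hC hi)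
    have him := S.rAct_eq_image i hC.1 hi
    have hD : (S.rAct i C \ C).Nonempty := by
      by_contra hD
      -- otherwise every root of `C` is orthogonal to `α i`
      have h0 : ∀ β ∈ C, S.refl i β = β := fun β hβ => S.refl_eq_self i <| by
        by_contra h0
        exact hD ⟨_, S.refl_mem_diff i hC hi hβ h0⟩
      apply hne
      rw [him, Set.image_congr h0, Set.image_id']
    obtain ⟨x, hx, hmin⟩ := S.exists_ht_eq_sInf (Set.sdiff_subset.trans hr) hD
    have hx1 := hx.1
    rw [him] at hx1
    obtain ⟨β, hβ, rfl⟩ := hx1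
    have h0 : ⟪β, S.α i⟫_ℝ ≠ 0 := fun h0 => hx.2 (by rwa [S.refl_eq_self i h0])
    have hle : ∀ γ ∈ C, ⟪γ, S.α i⟫_ℝ ≠ 0 → S.ht β - ⟪β, S.α i⟫_ℝ < S.ht γ := fun γ hγ hγ0 => by
      rw [← ht_refl, hmin]
      exact hlt.trans_le (csInf_le (S.bddBelow_ht (Set.sdiff_subset.trans hC.1))
        ⟨γ, S.mem_diff i hC hi hγ hγ0, rfl⟩)
    have h1 : ⟪β, S.α i⟫_ℝ = 1 := by
      have := hle β hβ h0
      rcases S.inner_cases (hC.1 hβ) (S.alpha_pos i) (fun e => hi (e ▸ hβ)) with h | h | h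
      · linarith
      · exact absurd h h0
      · exact h
    refine ⟨β, hβ, h1, fun β' hβ' h' => S.ht_le_of_lt_add_one (hC.1 hβ) (hC.1 hβ') ?_⟩
    have := hle β' hβ' (by rw [h']; norm_num)
    linarith
  · intro h
    have hi := h.alpha_notMem hC
    obtain ⟨β, hβ, h1, hle⟩ := h
    have h0 : ⟪β, S.α i⟫_ℝ ≠ 0 := by rw [h1]; norm_num
    have hβd := S.mem_diff i hC hi hβ h0
    refine ⟨fun e => hβd.2 (e.symm ▸ hβ), ?_⟩
    obtain ⟨m, hm, hmin⟩ := S.exists_ht_eq_sInf (Set.sdiff_subset.trans hC.1) ⟨β, hβd⟩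
    rw [← hmin]
    have hlow : ∀ γ ∈ C, ⟪γ, S.α i⟫_ℝ = 1 → S.ht γ ≤ S.ht m →
        sInf (S.ht '' (S.rAct i C \ C)) < S.ht m := fun γ hγ hγ1 hγm => by
      have := csInf_le (S.bddBelow_ht (Set.sdiff_subset.trans hr))
        ⟨_, S.refl_mem_diff i hC hi hγ (by rw [hγ1]; norm_num), rfl⟩
      rw [ht_refl, hγ1] at this
      linarith
    rcases S.inner_cases (hC.1 hm.1) (S.alpha_pos i) (fun e => hi (e ▸ hm.1)) with h | h | h
    · exact hlow β hβ h1 (hle m hm.1 h)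
    · refine absurd ?_ hm.2
      rw [S.rAct_eq_image i hC.1 hi]
      exact ⟨m, hm.1, S.refl_eq_self i h⟩
    · exact hlow m hm.1 h le_rfl

/-! ### Commuting reflections -/

/-- If `β` and `β'` are orthogonal of equal height, with `⟪β, α i⟫ = 1` and `⟪β', α i⟫ = -1`, then
`β' + α i - β` is simple; its inner product with `α j` cannot be `1`. -/
lemma inner_sub_ne_one {i j : Fin S.n} (hij : ⟪S.α i, S.α j⟫_ℝ = 0) {β β' : V} (hβ : β ∈ S.Pos)
    (hβ' : β' ∈ S.Pos) (hort : ⟪β, β'⟫_ℝ = 0) (h1 : ⟪β, S.α i⟫_ℝ = 1)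
    (h1' : ⟪β', S.α i⟫_ℝ = -1) (hht : S.ht β = S.ht β') :
    ⟪β', S.α j⟫_ℝ - ⟪β, S.α j⟫_ℝ ≠ 1 := fun h => by
  have hα := S.pos_subset (S.alpha_pos i)
  have hs : β' + S.α i ∈ S.Φ := S.add_mem (S.pos_subset hβ') hα h1'
  have hs' : β' + S.α i - β ∈ S.Φ := S.sub_mem hs (S.pos_subset hβ) <| by
    rw [inner_add_left, real_inner_comm, hort, real_inner_comm, h1, zero_add]
  have hh : S.ht (β' + S.α i - β) = 1 := by
    rw [map_sub, map_add, S.ht_alpha, hht]; ring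
  obtain ⟨k, hk⟩ := S.simple_of_ht_one (S.pos_of_ht hs' (by rw [hh]; norm_num)) hh
  apply S.inner_simple_ne_one k j
  rw [← hk, inner_sub_left, inner_add_left, hij]
  linarith

lemma Descends.rAct {S : SLRS V} {i j : Fin S.n} (hij : ⟪S.α i, S.α j⟫_ℝ = 0) {C : Set V}
    (hC : S.IsOrthoSet C) (hj : S.α j ∉ C)
    (hadm : ∀ γ ∈ C, γ - S.α i + S.α j ∉ C) (h : S.Descends i C) :
    S.Descends i (S.rAct j C) := by
  have hi := h.alpha_notMem hC
  have hji : ⟪S.α j, S.α i⟫_ℝ = 0 := by rw [real_inner_comm]; exact hij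
  obtain ⟨β, hβ, h1, hle⟩ := h
  have hinner : ∀ v, ⟪S.refl j v, S.α i⟫_ℝ = ⟪v, S.α i⟫_ℝ := fun v => by
    rw [refl_apply, inner_sub_left, real_inner_smul_left, hji]; ring
  rw [S.rAct_eq_image j hC.1 hj]
  refine ⟨_, ⟨β, hβ, rfl⟩, by rw [hinner, h1], ?_⟩
  rintro _ ⟨β', hβ', rfl⟩ h1'
  rw [hinner] at h1'
  have hle' := hle β' hβ' h1'
  have hort : ⟪β, β'⟫_ℝ = 0 := hC.2 β hβ β' hβ' fun e => by
    rw [e, h1'] at h1; norm_num at h1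
  have hne1 := S.inner_sub_ne_one hij (hC.1 hβ) (hC.1 hβ') hort h1 h1'
  rw [ht_refl, ht_refl]
  by_contra! hcon
  -- a difference of inner products equal to `1` forces equal heights
  have heq : ⟪β', S.α j⟫_ℝ - ⟪β, S.α j⟫_ℝ = 1 → False := fun hd =>
    hne1 (le_antisymm hle' (S.ht_le_of_lt_add_one (hC.1 hβ') (hC.1 hβ) (by linarith))) hd
  have cβ := S.inner_cases (hC.1 hβ) (S.alpha_pos j) (fun e => hj (e ▸ hβ))
  have cβ' := S.inner_cases (hC.1 hβ') (S.alpha_pos j) (fun e => hj (e ▸ hβ'))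
  have h2 : ⟪β, S.α j⟫_ℝ = -1 ∧ ⟪β', S.α j⟫_ℝ = 1 := by
    rcases cβ with c | c | c <;> rcases cβ' with c' | c' | c' <;> rw [c, c'] at hcon heq <;>
      first
      | exact ⟨c, c'⟩
      | (exfalso; linarith)
      | (exfalso; exact heq (by norm_num))
  have hm : β - S.α i ∈ S.Φ :=
    S.sub_mem (S.pos_subset (hC.1 hβ)) (S.pos_subset (S.alpha_pos i)) h1
  have hm' : β - S.α i + S.α j ∈ S.Φ := S.add_mem hm (S.pos_subset (S.alpha_pos j)) <| by
    rw [inner_sub_left, h2.1, hij]; norm_num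
  have he : β - S.α i + S.α j = β' := S.eq_of_inner_two hm' (S.pos_subset (hC.1 hβ')) <| by
    rw [inner_add_left, inner_sub_left, hort, real_inner_comm, h1', real_inner_comm, h2.2]
    norm_num
  exact hadm β hβ (he ▸ hβ')

lemma rAct_comm {S : SLRS V} {i j : Fin S.n} (hij : ⟪S.α i, S.α j⟫_ℝ = 0) {C : Set V}
    (hC : S.IsOrthoSet C) (hi : S.Descends i C) (hj : S.Descends j C)
    (hi' : S.Descends i (S.rAct j C)) (hj' : S.Descends j (S.rAct i C)) :
    S.rAct i (S.rAct j C) = S.rAct j (S.rAct i C) := by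
  have hCi := S.isOrthoSet_rAct i hC
  have hCj := S.isOrthoSet_rAct j hC
  rw [S.rAct_eq_image i hCj.1 (hi'.alpha_notMem hCj),
    S.rAct_eq_image j hCi.1 (hj'.alpha_notMem hCi),
    S.rAct_eq_image i hC.1 (hi.alpha_notMem hC), S.rAct_eq_image j hC.1 (hj.alpha_notMem hC),
    Set.image_image, Set.image_image]
  exact Set.image_congr fun v _ => S.refl_comm hij v

end Aux

end SLRS

/-- Proposition 3.1(iii): for `𝓑` admissible, `B ∈ 𝓑`, nodes
`i ≠ j` with `i ≁ j`: if `r i · B < B`, `r j · B < B` and `r i · B ≠ r j · B`,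
then `r i r j · B < r j · B` and `r i r j · B < r i · B`. -/
theorem lower_lower_nonadjacent (S : SLRS V) (𝓑 : Set (Set V))
    (hadm : S.Admissible 𝓑) (B : Set V) (hB : B ∈ 𝓑) (i j : Fin S.n)
    (hne : i ≠ j) (hnadj : ¬ S.adj i j)
    (hi : S.lt (S.rAct i B) B) (hj : S.lt (S.rAct j B) B)
    (hij : S.rAct i B ≠ S.rAct j B) :
    S.lt (S.rAct i (S.rAct j B)) (S.rAct j B) ∧
    S.lt (S.rAct i (S.rAct j B)) (S.rAct i B) := by
  have hC : S.IsOrthoSet B := hadm.1.isOrthoSet hB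
  have hαij : S.α i ≠ S.α j := fun e => hij (by
    have : S.refl i = S.refl j := by funext v; rw [S.refl_apply, S.refl_apply, e]
    rw [SLRS.rAct, SLRS.rAct, this])
  have h0 : ⟪S.α i, S.α j⟫_ℝ = 0 := by
    rcases S.inner_cases (S.alpha_pos i) (S.alpha_pos j) hαij with h | h | h
    · exact absurd h hnadj
    · exact h
    · exact absurd h (S.inner_simple_ne_one i j)
  have h0' : ⟪S.α j, S.α i⟫_ℝ = 0 := by rw [real_inner_comm]; exact h0
  have hnadj' : ¬ S.adj j i := by rw [SLRS.adj, h0']; norm_num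
  rw [S.lt_iff_descends i hC] at hi
  rw [S.lt_iff_descends j hC] at hj
  have hi' : S.Descends i (S.rAct j B) := hi.rAct h0 hC (hj.alpha_notMem hC) fun γ hγ hγ' =>
    hij (hadm.2 B hB i j hne hnadj ⟨γ, hγ, hγ'⟩)
  have hj' : S.Descends j (S.rAct i B) := hj.rAct h0' hC (hi.alpha_notMem hC) fun γ hγ hγ' =>
    hij (hadm.2 B hB j i hne.symm hnadj' ⟨γ, hγ, hγ'⟩).symm
  refine ⟨(S.lt_iff_descends i (S.isOrthoSet_rAct j hC)).2 hi', ?_⟩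
  rw [rAct_comm h0 hC hi hj hi' hj']
  exact (S.lt_iff_descends j (S.isOrthoSet_rAct i hC)).2 hj'
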